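/- For every Z ∈ L^∞_T, the conditional utility satisfies U_t(Z) = esssup_{(X_s)∈𝓐_{1,t}(Z)} Σ_{s=t}^T E[u_s^{(n)}(X_s) | 𝓕_t], where 𝓐_{1,t}(Z) is the set of families (X_s)_{s=t,…,T} with X_s ∈ L^∞_s and Σ_{s=t}^T X_s = Z a.s.; i.e. the n-fold diversification problem reduces to the one-product problem for the sup-convolutions u_s^{(n)}. -/

import Mathlib

open MeasureTheory Filter

variable {Ω : Type*}

/-- `X ∈ L^∞(m)`: `m`-measurable and (essentially) bounded. -/
def MeasBdd (m : MeasurableSpace Ω) (X : Ω → ℝ) : Prop :=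
  Measurable[m] X ∧ ∃ C : ℝ, ∀ ω, |X ω| ≤ C

/-- `u` is a utility function (strictly increasing, strictly concave, `C¹`) with
derivative `u'` satisfying `u 0 = 0`, `u' 0 = 1`, `u'(+∞) = 0`, `u'(-∞) = +∞`. -/
structure IsUtility (u u' : ℝ → ℝ) : Prop where
  strictMono : StrictMono u
  strictConcave : StrictConcaveOn ℝ Set.univ u
  hasDeriv : ∀ x, HasDerivAt u (u' x) x
  derivCont : Continuous u'
  zero : u 0 = 0
  deriv_zero : u' 0 = 1
  deriv_top : Tendsto u' atTop (nhds 0)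
  deriv_bot : Tendsto u' atBot atTop

/-- A diversification of `Z` at time `t`: an adapted family `(X i s)`,
`i = 1,…,n`, `s = t,…,T`, of essentially bounded random variables summing to `Z`. -/
def IsDiv {m0 : MeasurableSpace Ω} (P : Measure Ω) (ℱ : Filtration ℕ m0)
    (n t T : ℕ) (Z : Ω → ℝ) (X : ℕ → ℕ → Ω → ℝ) : Prop :=
  (∀ i ∈ Finset.Icc 1 n, ∀ s ∈ Finset.Icc t T, MeasBdd (ℱ s) (X i s)) ∧
  ∀ᵐ ω ∂P, (∑ i ∈ Finset.Icc 1 n, ∑ s ∈ Finset.Icc t T, X i s ω) = Z ω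

/-- The total conditional expected utility `∑_{i,s} E[u_{i,s}(X_{i,s}) | 𝓕_t]`. -/
noncomputable def utilSum {m0 : MeasurableSpace Ω} (P : Measure Ω) (ℱ : Filtration ℕ m0)
    (u : ℕ → ℕ → ℝ → ℝ) (n t T : ℕ) (X : ℕ → ℕ → Ω → ℝ) : Ω → ℝ :=
  fun ω => ∑ i ∈ Finset.Icc 1 n, ∑ s ∈ Finset.Icc t T,
    (P[fun ω' => u i s (X i s ω') | ℱ t]) ω

/-- `g` is an essential supremum of the family `S` of random variables under `P`. -/
def IsEssSupOf {m0 : MeasurableSpace Ω} (P : Measure Ω) (S : Set (Ω → ℝ)) (g : Ω → ℝ) : Prop :=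
  (∀ f ∈ S, f ≤ᵐ[P] g) ∧ ∀ h : Ω → ℝ, (∀ f ∈ S, f ≤ᵐ[P] h) → g ≤ᵐ[P] h

/-- A one-product diversification of `Z` at time `t`: an adapted family `(X s)`,
`s = t,…,T`, of essentially bounded random variables summing to `Z`. -/
def IsDiv1 {m0 : MeasurableSpace Ω} (P : Measure Ω) (ℱ : Filtration ℕ m0)
    (t T : ℕ) (Z : Ω → ℝ) (X : ℕ → Ω → ℝ) : Prop :=
  (∀ s ∈ Finset.Icc t T, MeasBdd (ℱ s) (X s)) ∧
  ∀ᵐ ω ∂P, (∑ s ∈ Finset.Icc t T, X s ω) = Z ω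

/-- The sup-convolution `u^{(n)}(x) = sup { Σ_{i=1}^n u_i(x_i) : Σ_{i=1}^n x_i = x }`. -/
noncomputable def supConv (u : ℕ → ℝ → ℝ) (n : ℕ) (x : ℝ) : ℝ :=
  sSup {y | ∃ xs : ℕ → ℝ, (∑ i ∈ Finset.Icc 1 n, xs i) = x ∧
    y = ∑ i ∈ Finset.Icc 1 n, u i (xs i)}

theorem IsUtility.tangent {u u' : ℝ → ℝ} (h : IsUtility u u') (x z : ℝ) :
    u z ≤ u x + u' x * (z - x) := by
  have hc := h.strictConcave.concaveOn
  rcases lt_trichotomy x z with hxz | rfl | hxz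
  · have := hc.slope_le_of_hasDerivAt (Set.mem_univ x) (Set.mem_univ z) hxz (h.hasDeriv x)
    rw [slope_def_field, div_le_iff₀ (by linarith)] at this
    linarith
  · simp
  · have := hc.le_slope_of_hasDerivAt (Set.mem_univ z) (Set.mem_univ x) hxz (h.hasDeriv x)
    rw [slope_def_field, le_div_iff₀ (by linarith)] at this
    nlinarith

theorem IsUtility.strictAnti {u u' : ℝ → ℝ} (h : IsUtility u u') : StrictAnti u' := by
  have hd : deriv u = u' := funext fun x => (h.hasDeriv x).deriv
  have := h.strictConcave.strictAntiOn_deriv (fun x _ => (h.hasDeriv x).differentiableAt)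
  rw [hd] at this
  exact fun a b hab => this (Set.mem_univ a) (Set.mem_univ b) hab

theorem IsUtility.deriv_pos {u u' : ℝ → ℝ} (h : IsUtility u u') (x : ℝ) : 0 < u' x := by
  have h1 := h.strictAnti (lt_add_one x)
  have h2 := h.tangent (x + 1) (x + 2)
  have h3 := h.strictMono (show x + 1 < x + 2 by linarith)
  ring_nf at h2 h3
  have : u' (x + 1) = u' (1 + x) := by rw [add_comm]
  linarith

theorem IsUtility.exists_deriv {u u' : ℝ → ℝ} (h : IsUtility u u') {c : ℝ} (hc : 0 < c) :
    ∃ x, u' x = c := by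
  obtain ⟨a, ha⟩ := (h.deriv_top.eventually (gt_mem_nhds hc)).exists
  obtain ⟨b, hb⟩ := (h.deriv_bot.eventually (eventually_ge_atTop c)).exists
  exact mem_range_of_exists_le_of_exists_ge h.derivCont ⟨a, ha.le⟩ ⟨b, hb⟩

/-- Monotone optimal allocations for the sup-convolution. -/
theorem exists_alloc (u u' : ℕ → ℝ → ℝ) (hu : ∀ i, IsUtility (u i) (u' i)) (n : ℕ) (hn : 0 < n) :
    ∃ φ : ℕ → ℝ → ℝ, (∀ i, Monotone (φ i)) ∧ (∀ x, ∑ i ∈ Finset.Icc 1 n, φ i x = x) ∧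
      ∀ x, ∀ zs : ℕ → ℝ, ∑ i ∈ Finset.Icc 1 n, zs i = x →
        ∑ i ∈ Finset.Icc 1 n, u i (zs i) ≤ ∑ i ∈ Finset.Icc 1 n, u i (φ i x) := by
  have hex : ∀ i y, ∃ z, u' i z = u' 1 y := fun i y => (hu i).exists_deriv ((hu 1).deriv_pos y)
  choose ψ hψ using hex
  have hmono : ∀ i, StrictMono (ψ i) := by
    intro i a b hab
    rw [← (hu i).strictAnti.lt_iff_gt, hψ, hψ]
    exact (hu 1).strictAnti hab
  have hone : ∀ y, ψ 1 y = y := fun y => (hu 1).strictAnti.injective (hψ 1 y)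
  have hzero : ∀ i, ψ i 0 = 0 := fun i => (hu i).strictAnti.injective (by
    rw [hψ, (hu 1).deriv_zero, (hu i).deriv_zero])
  have hsurj : ∀ i, Function.Surjective (ψ i) := by
    intro i z
    obtain ⟨y, hy⟩ := (hu 1).exists_deriv ((hu i).deriv_pos z)
    exact ⟨y, (hu i).strictAnti.injective (by rw [hψ, hy])⟩
  have hcont : ∀ i, Continuous (ψ i) := fun i =>
    (hmono i).monotone.continuous_of_surjective (hsurj i)
  have h1 : 1 ∈ Finset.Icc 1 n := Finset.mem_Icc.2 ⟨le_rfl, hn⟩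
  set H : ℝ → ℝ := fun y => ∑ i ∈ Finset.Icc 1 n, ψ i y with hH
  have Hmono : StrictMono H := fun a b hab =>
    Finset.sum_lt_sum_of_nonempty ⟨1, h1⟩ fun i _ => hmono i hab
  have Hcont : Continuous H := continuous_finsetSum _ fun i _ => hcont i
  have Hsurj : Function.Surjective H := by
    intro c
    refine mem_range_of_exists_le_of_exists_ge Hcont ⟨min c 0, ?_⟩ ⟨max c 0, ?_⟩
    · have hs : ∑ i ∈ Finset.Icc 1 n, (- ψ i (min c 0)) ≥ - ψ 1 (min c 0) := by
        refine Finset.single_le_sum (f := fun i => - ψ i (min c 0)) (fun i _ => ?_) h1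
        have := (hmono i).monotone (min_le_right c 0)
        rw [hzero] at this
        simpa using this
      rw [Finset.sum_neg_distrib, hone] at hs
      have := min_le_left c 0
      simp only [hH]
      linarith
    · have hs : ψ 1 (max c 0) ≤ ∑ i ∈ Finset.Icc 1 n, ψ i (max c 0) := by
        refine Finset.single_le_sum (f := fun i => ψ i (max c 0)) (fun i _ => ?_) h1
        have := (hmono i).monotone (le_max_right c 0)
        rw [hzero] at this
        simpa using this
      rw [hone] at hs
      exact (le_max_left c 0).trans hs
  choose K hK using Hsurj
  have Kmono : Monotone K := by
    intro a b hab
    rw [← Hmono.le_iff_le, hK, hK]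
    exact hab
  refine ⟨fun i x => ψ i (K x), fun i => (hmono i).monotone.comp Kmono, hK, ?_⟩
  intro x zs hzs
  calc ∑ i ∈ Finset.Icc 1 n, u i (zs i)
      ≤ ∑ i ∈ Finset.Icc 1 n, (u i (ψ i (K x)) + u' 1 (K x) * (zs i - ψ i (K x))) := by
        refine Finset.sum_le_sum fun i _ => ?_
        have := (hu i).tangent (ψ i (K x)) (zs i)
        rwa [hψ] at this
    _ = ∑ i ∈ Finset.Icc 1 n, u i (ψ i (K x)) := by
        have h2 : ∑ i ∈ Finset.Icc 1 n, ψ i (K x) = x := hK x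
        rw [Finset.sum_add_distrib, ← Finset.mul_sum, Finset.sum_sub_distrib, hzs, h2]
        ring

theorem MeasBdd.mono_comp {m : MeasurableSpace Ω} {X : Ω → ℝ} (h : MeasBdd m X) {f : ℝ → ℝ}
    (hf : Monotone f) : MeasBdd m (fun ω => f (X ω)) := by
  obtain ⟨hm, C, hC⟩ := h
  refine ⟨hf.measurable.comp hm, max |f (-C)| |f C|, fun ω => ?_⟩
  have := abs_le.1 (hC ω)
  exact abs_le_max_abs_abs (hf this.1) (hf this.2)

theorem MeasBdd.sum {m : MeasurableSpace Ω} {X : ℕ → Ω → ℝ} (S : Finset ℕ)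
    (h : ∀ i ∈ S, MeasBdd m (X i)) : MeasBdd m (fun ω => ∑ i ∈ S, X i ω) := by
  refine ⟨Finset.measurable_fun_sum S fun i hi => (h i hi).1, ?_⟩
  choose! C hC using fun i hi => (h i hi).2
  exact ⟨∑ i ∈ S, C i, fun ω => (Finset.abs_sum_le_sum_abs _ _).trans
    (Finset.sum_le_sum fun i hi => hC i hi ω)⟩

theorem MeasBdd.integrable {m m0 : MeasurableSpace Ω} {P : Measure Ω} [IsProbabilityMeasure P]
    (hm : m ≤ m0) {X : Ω → ℝ} (h : MeasBdd m X) : Integrable X P := by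
  obtain ⟨h1, C, hC⟩ := h
  exact Integrable.of_bound (h1.mono hm le_rfl).aestronglyMeasurable C (ae_of_all _ hC)

theorem utilSum_ae {m0 : MeasurableSpace Ω} (P : Measure Ω) [IsProbabilityMeasure P]
    (ℱ : Filtration ℕ m0) (T n t : ℕ)
    (u u' : ℕ → ℕ → ℝ → ℝ) (hu : ∀ i s, IsUtility (u i s) (u' i s))
    (X : ℕ → ℕ → Ω → ℝ)
    (hX : ∀ i ∈ Finset.Icc 1 n, ∀ s ∈ Finset.Icc t T, MeasBdd (ℱ s) (X i s)) :
    utilSum P ℱ u n t T X =ᵐ[P] fun ω => ∑ s ∈ Finset.Icc t T,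
      (P[fun ω' => ∑ i ∈ Finset.Icc 1 n, u i s (X i s ω') | ℱ t]) ω := by
  have key : ∀ s ∈ Finset.Icc t T, ∀ᵐ ω ∂P,
      (P[fun ω' => ∑ i ∈ Finset.Icc 1 n, u i s (X i s ω') | ℱ t]) ω =
      ∑ i ∈ Finset.Icc 1 n, (P[fun ω' => u i s (X i s ω') | ℱ t]) ω := by
    intro s hs
    have h := condExp_finsetSum (μ := P) (s := Finset.Icc 1 n)
      (f := fun i ω' => u i s (X i s ω'))
      (fun i hi => ((hX i hi s hs).mono_comp (hu i s).strictMono.monotone).integrable (ℱ.le s))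
      (ℱ t)
    have he : (∑ i ∈ Finset.Icc 1 n, fun ω' => u i s (X i s ω')) =
        fun ω' => ∑ i ∈ Finset.Icc 1 n, u i s (X i s ω') := by
      ext ω; simp
    rw [he] at h
    filter_upwards [h] with ω hω
    rw [hω]; simp
  have key2 := (Filter.eventually_all_finset (Finset.Icc t T)).2 key
  filter_upwards [key2] with ω hω
  rw [utilSum, Finset.sum_comm]
  exact Finset.sum_congr rfl fun s hs => (hω s hs).symm

/-- Proposition 2.17: the `n`-fold diversification problem reduces to the
one-product problem for the sup-convolutions `u_s^{(n)}`:
`U_t(Z) = esssup_{(X_s) ∈ 𝓐_{1,t}(Z)} Σ_{s=t}^T E[u_s^{(n)}(X_s) | 𝓕_t]`. -/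
theorem conditional_utility_eq_supConv_essSup
    {m0 : MeasurableSpace Ω} (P : Measure Ω) [IsProbabilityMeasure P]
    (ℱ : Filtration ℕ m0) (T n t : ℕ) (hT : 0 < T) (hn : 0 < n) (ht : t ≤ T)
    (u u' : ℕ → ℕ → ℝ → ℝ) (hu : ∀ i s, IsUtility (u i s) (u' i s))
    (U : (Ω → ℝ) → Ω → ℝ)
    (hU : ∀ W : Ω → ℝ, MeasBdd (ℱ T) W →
      IsEssSupOf P
        {g | ∃ X : ℕ → ℕ → Ω → ℝ, IsDiv P ℱ n t T W X ∧ g = utilSum P ℱ u n t T X}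
        (U W))
    (Z : Ω → ℝ) (hZ : MeasBdd (ℱ T) Z) :
    IsEssSupOf P
      {g | ∃ X : ℕ → Ω → ℝ, IsDiv1 P ℱ t T Z X ∧
        g = fun ω => ∑ s ∈ Finset.Icc t T,
          (P[fun ω' => supConv (fun i => u i s) n (X s ω') | ℱ t]) ω}
      (U Z) := by
  have hal := fun s => exists_alloc (fun i => u i s) (fun i => u' i s) (fun i => hu i s) n hn
  choose φ hφm hφs hφo using hal
  have hsc : ∀ s x, supConv (fun i => u i s) n x = ∑ i ∈ Finset.Icc 1 n, u i s (φ s i x) := by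
    intro s x
    refine IsGreatest.csSup_eq ⟨⟨fun i => φ s i x, hφs s x, rfl⟩, ?_⟩
    rintro y ⟨zs, hzs, rfl⟩
    exact hφo s x zs hzs
  simp only [hsc]
  have hmono : ∀ i s, Monotone fun x => u i s (φ s i x) := fun i s =>
    (hu i s).strictMono.monotone.comp (hφm s i)
  constructor
  · rintro f ⟨X, hX, rfl⟩
    have hd : ∀ i ∈ Finset.Icc 1 n, ∀ s ∈ Finset.Icc t T,
        MeasBdd (ℱ s) (fun ω => φ s i (X s ω)) := fun i _ s hs =>
      (hX.1 s hs).mono_comp (hφm s i)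
    have hle := (hU Z hZ).1 _ ⟨fun i s ω => φ s i (X s ω), ⟨hd, ?_⟩, rfl⟩
    · exact (utilSum_ae P ℱ T n t u u' hu _ hd).symm.le.trans hle
    · filter_upwards [hX.2] with ω hω
      rw [Finset.sum_comm, ← hω]
      exact Finset.sum_congr rfl fun s _ => hφs s _
  · intro h hh
    refine (hU Z hZ).2 h ?_
    rintro f ⟨X, hX, rfl⟩
    have hY : ∀ s ∈ Finset.Icc t T, MeasBdd (ℱ s) (fun ω => ∑ i ∈ Finset.Icc 1 n, X i s ω) :=
      fun s hs => MeasBdd.sum _ fun i hi => hX.1 i hi s hs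
    have hle := hh _ ⟨fun s ω => ∑ i ∈ Finset.Icc 1 n, X i s ω, ⟨hY, ?_⟩, rfl⟩
    · refine (utilSum_ae P ℱ T n t u u' hu X hX.1).le.trans (EventuallyLE.trans ?_ hle)
      have key : ∀ s ∈ Finset.Icc t T, ∀ᵐ ω ∂P,
          (P[fun ω' => ∑ i ∈ Finset.Icc 1 n, u i s (X i s ω') | ℱ t]) ω ≤
          (P[fun ω' => ∑ i ∈ Finset.Icc 1 n,
            u i s (φ s i (∑ j ∈ Finset.Icc 1 n, X j s ω')) | ℱ t]) ω := by
        intro s hs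
        refine condExp_mono ?_ ?_ (ae_of_all _ fun ω => hφo s _ (fun i => X i s ω) rfl)
        · exact (MeasBdd.sum _ fun i hi =>
            (hX.1 i hi s hs).mono_comp (hu i s).strictMono.monotone).integrable (ℱ.le s)
        · exact (MeasBdd.sum _ fun i hi => (hY s hs).mono_comp (hmono i s)).integrable (ℱ.le s)
      filter_upwards [(Filter.eventually_all_finset (Finset.Icc t T)).2 key] with ω hω
      exact Finset.sum_le_sum hω
    · filter_upwards [hX.2] with ω hω
      rw [Finset.sum_comm, hω]
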